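/- Let L, T, τ > 0 and let f : ℝ → ℝ be continuously differentiable. Let q = (q₀, …, q₄) be a C¹ solution, L-periodic in x, of ∂_t q₀ + ∂_x f(q₀) − ∂_x q₄ = 0, τ ∂_t q₁ − ∂_x q₁ + ∂_x q₃ = q₄, τ ∂_t q₂ − ∂_x q₂ = −q₃, τ ∂_t q₃ + ∂_x q₁ = q₂, τ ∂_t q₄ − ∂_x q₀ = −q₁, and let q̄ = (q̄₀, …, q̄₄) be a C¹ tuple, L-periodic in x, satisfying the same five equations except that the first one carries a residual: ∂_t q̄₀ + ∂_x f(q̄₀) − ∂_x q̄₄ = τ R for some continuous R. Then the relative energy η(q, q̄)(t) = ∫₀^L ( ½ (q₀−q̄₀)² + (τ/2) Σ_{j=1}^{4} (q_j−q̄_j)² ) dx satisfies, for all t ∈ [0,T], d/dt η(q, q̄)(t) = −∫₀^L [ (q₀−q̄₀) ∂_x ( f(q₀) − f(q̄₀) ) + τ (q₀−q̄₀) R ] dx. -/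

import Mathlib

open MeasureTheory

/-- Partial derivative with respect to the first (time) variable. -/
noncomputable def pdt (u : ℝ → ℝ → ℝ) : ℝ → ℝ → ℝ :=
  fun t x => deriv (fun s => u s x) t

/-- Partial derivative with respect to the second (space) variable. -/
noncomputable def pdx (u : ℝ → ℝ → ℝ) : ℝ → ℝ → ℝ :=
  fun t x => deriv (fun y => u t y) x

/-!
The system is a symmetric hyperbolic system `M ∂ₜq + A ∂ₓq + B q = F` with `M`, `A` symmetric,
`B` skew-symmetric, and the nonlinearity and the residual collected in `F`. The difference `w` of
two solutions solves the same linear system with the difference of the sources. Testing it with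
`w` turns the first two terms into the exact derivatives `∂ₜ(½ w·Mw) + ∂ₓ(½ w·Aw)` and annihilates
`w·Bw`; integrating over a period removes the flux.
-/

section PartialDerivatives

variable {u v : ℝ → ℝ → ℝ}

theorem hasDerivAt_pdt (hu : Differentiable ℝ (Function.uncurry u)) (t x : ℝ) :
    HasDerivAt (fun s => u s x) (pdt u t x) t :=
  (hu.comp (differentiable_id.prodMk (differentiable_const x)) t).hasDerivAt

theorem hasDerivAt_pdx (hu : Differentiable ℝ (Function.uncurry u)) (t x : ℝ) :
    HasDerivAt (u t) (pdx u t x) x :=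
  (hu.comp ((differentiable_const t).prodMk differentiable_id) x).hasDerivAt

theorem pdt_sub (hu : Differentiable ℝ (Function.uncurry u))
    (hv : Differentiable ℝ (Function.uncurry v)) (t x : ℝ) :
    pdt (u - v) t x = pdt u t x - pdt v t x :=
  ((hasDerivAt_pdt hu t x).sub (hasDerivAt_pdt hv t x)).deriv

theorem pdx_sub (hu : Differentiable ℝ (Function.uncurry u))
    (hv : Differentiable ℝ (Function.uncurry v)) (t x : ℝ) :
    pdx (u - v) t x = pdx u t x - pdx v t x :=
  ((hasDerivAt_pdx hu t x).sub (hasDerivAt_pdx hv t x)).deriv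

theorem continuous_uncurry_pdt (hu : ContDiff ℝ 1 (Function.uncurry u)) :
    Continuous (Function.uncurry (pdt u)) := by
  have pdt_eq_fderiv : Function.uncurry (pdt u) =
      fun p : ℝ × ℝ => fderiv ℝ (Function.uncurry u) p (1, 0) := by
    ext ⟨t, x⟩
    exact ((hu.differentiable one_ne_zero (t, x)).hasFDerivAt.comp_hasDerivAt t
      ((hasDerivAt_id t).prodMk (hasDerivAt_const t x))).deriv
  rw [pdt_eq_fderiv]
  exact (hu.continuous_fderiv one_ne_zero).clm_apply continuous_const

theorem continuous_uncurry_pdx (hu : ContDiff ℝ 1 (Function.uncurry u)) :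
    Continuous (Function.uncurry (pdx u)) :=
  have hflip : ContDiff ℝ 1 (Function.uncurry (flip u)) :=
    hu.comp (contDiff_snd.prodMk contDiff_fst)
  (continuous_uncurry_pdt hflip).comp continuous_swap

end PartialDerivatives

section BalanceLaw

theorem hasDerivAt_intervalIntegral_pdt {u : ℝ → ℝ → ℝ}
    (hu : ContDiff ℝ 1 (Function.uncurry u)) (a b t : ℝ) :
    HasDerivAt (fun s => ∫ x in a..b, u s x) (∫ x in a..b, pdt u t x) t := by
  have hslice (s : ℝ) : Continuous (u s) := hu.continuous.uncurry_left s
  have hpdt := continuous_uncurry_pdt hu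
  obtain ⟨C, hC⟩ := (isCompact_Icc.prod isCompact_uIcc :
    IsCompact (Set.Icc (t - 1) (t + 1) ×ˢ Set.uIcc a b)).exists_bound_of_continuousOn
      hpdt.continuousOn
  exact (intervalIntegral.hasDerivAt_integral_of_dominated_loc_of_deriv_le
    (bound := fun _ => C) (F' := pdt u)
    (Icc_mem_nhds (sub_one_lt t) (lt_add_one t))
    (.of_forall fun s => (hslice s).aestronglyMeasurable)
    ((hslice t).intervalIntegrable a b)
    (hpdt.uncurry_left t).aestronglyMeasurable
    (.of_forall fun x hx s hs => hC (s, x) ⟨hs, Set.uIoc_subset_uIcc hx⟩)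
    intervalIntegrable_const
    (.of_forall fun x _ s _ => hasDerivAt_pdt (hu.differentiable one_ne_zero) s x)).2

theorem intervalIntegral_pdx_eq_sub {u : ℝ → ℝ → ℝ}
    (hu : ContDiff ℝ 1 (Function.uncurry u)) (a b t : ℝ) :
    ∫ x in a..b, pdx u t x = u t b - u t a :=
  intervalIntegral.integral_eq_sub_of_hasDerivAt
    (fun x _ => hasDerivAt_pdx (hu.differentiable one_ne_zero) t x)
    (((continuous_uncurry_pdx hu).uncurry_left t).intervalIntegrable a b)

theorem hasDerivAt_intervalIntegral_of_balance_law {e φ : ℝ → ℝ → ℝ} {g : ℝ → ℝ} {a b t : ℝ}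
    (he : ContDiff ℝ 1 (Function.uncurry e)) (hφ : ContDiff ℝ 1 (Function.uncurry φ))
    (hbalance : ∀ x, pdt e t x + pdx φ t x = g x) :
    HasDerivAt (fun s => ∫ x in a..b, e s x) ((∫ x in a..b, g x) - (φ t b - φ t a)) t := by
  have hint : ∫ x in a..b, g x = (∫ x in a..b, pdt e t x) + (φ t b - φ t a) := by
    rw [← intervalIntegral_pdx_eq_sub hφ, ← intervalIntegral.integral_add
      (((continuous_uncurry_pdt he).uncurry_left t).intervalIntegrable a b)
      (((continuous_uncurry_pdx hφ).uncurry_left t).intervalIntegrable a b)]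
    simp only [hbalance]
  rw [hint, add_sub_cancel_right]
  exact hasDerivAt_intervalIntegral_pdt he a b t

end BalanceLaw

section SymmetricSystem

open Matrix

variable {ι : Type*} [Fintype ι] {M A B : Matrix ι ι ℝ} {L t : ℝ}
  {q q' : ι → ℝ → ℝ → ℝ} {F F' : ℝ → ι → ℝ}

theorem dotProduct_mulVec_comm_of_isSymm (hM : M.IsSymm) (v w : ι → ℝ) :
    v ⬝ᵥ M *ᵥ w = w ⬝ᵥ M *ᵥ v := by
  rw [← dotProduct_transpose_mulVec, hM.eq]

theorem dotProduct_mulVec_self_of_transpose_eq_neg (hB : Bᵀ = -B) (v : ι → ℝ) :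
    v ⬝ᵥ B *ᵥ v = 0 := by
  have h := dotProduct_transpose_mulVec B v v
  rw [hB, neg_mulVec, dotProduct_neg] at h
  exact self_eq_neg.mp h.symm

theorem hasDerivAt_half_dotProduct_mulVec (hM : M.IsSymm) {v : ℝ → ι → ℝ} {v' : ι → ℝ} {s : ℝ}
    (hv : ∀ i, HasDerivAt (fun r => v r i) (v' i) s) :
    HasDerivAt (fun r => (v r ⬝ᵥ M *ᵥ v r) / 2) (v s ⬝ᵥ M *ᵥ v') s := by
  have hMv (i : ι) : HasDerivAt (fun r => (M *ᵥ v r) i) ((M *ᵥ v') i) s :=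
    HasDerivAt.fun_sum fun j _ => (hv j).const_mul (M i j)
  have hprod : HasDerivAt (fun r => v r ⬝ᵥ M *ᵥ v r) (v' ⬝ᵥ M *ᵥ v s + v s ⬝ᵥ M *ᵥ v') s := by
    simp only [dotProduct, ← Finset.sum_add_distrib]
    exact HasDerivAt.fun_sum fun i _ => (hv i).fun_mul (hMv i)
  rw [dotProduct_mulVec_comm_of_isSymm hM v', ← two_mul] at hprod
  simpa using hprod.div_const 2

theorem contDiff_half_dotProduct_mulVec (M : Matrix ι ι ℝ)
    (hq : ∀ i, ContDiff ℝ 1 (Function.uncurry (q i))) :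
    ContDiff ℝ 1 (Function.uncurry fun s x => ((q · s x) ⬝ᵥ M *ᵥ (q · s x)) / 2) :=
  (ContDiff.sum fun i _ => (hq i).mul
    (ContDiff.sum fun j _ => contDiff_const.mul (hq j))).div_const 2

/-- A `C¹` tuple `q`, `L`-periodic in space at time `t`, that solves the linear system
`M ∂ₜq + A ∂ₓq + B q = F` at that time. Nonlinear terms belong to the source `F`, which
is recorded at time `t` only. -/
structure IsPeriodicSolutionAt (M A B : Matrix ι ι ℝ) (L t : ℝ) (q : ι → ℝ → ℝ → ℝ)
    (F : ℝ → ι → ℝ) : Prop where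
  contDiff : ∀ i, ContDiff ℝ 1 (Function.uncurry (q i))
  periodic : ∀ i, Function.Periodic (q i t) L
  equation : ∀ x, M *ᵥ (fun i => pdt (q i) t x) + A *ᵥ (fun i => pdx (q i) t x)
    + B *ᵥ (q · t x) = F x

namespace IsPeriodicSolutionAt

theorem sub (hq : IsPeriodicSolutionAt M A B L t q F)
    (hq' : IsPeriodicSolutionAt M A B L t q' F') :
    IsPeriodicSolutionAt M A B L t (q - q') (F - F') where
  contDiff i := (hq.contDiff i).sub (hq'.contDiff i)
  periodic i := (hq.periodic i).sub (hq'.periodic i)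
  equation x := by
    have hdiff (i : ι) := (hq.contDiff i).differentiable one_ne_zero
    have hdiff' (i : ι) := (hq'.contDiff i).differentiable one_ne_zero
    have ht : (fun i => pdt ((q - q') i) t x)
        = (fun i => pdt (q i) t x) - fun i => pdt (q' i) t x :=
      funext fun i => pdt_sub (hdiff i) (hdiff' i) t x
    have hx : (fun i => pdx ((q - q') i) t x)
        = (fun i => pdx (q i) t x) - fun i => pdx (q' i) t x :=
      funext fun i => pdx_sub (hdiff i) (hdiff' i) t x
    have hval : ((q - q') · t x) = (q · t x) - (q' · t x) := rfl
    rw [ht, hx, hval, Pi.sub_apply, ← hq.equation x, ← hq'.equation x]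
    simp only [mulVec_sub]
    abel

theorem balance_law (hM : M.IsSymm) (hA : A.IsSymm) (hB : Bᵀ = -B)
    (hq : IsPeriodicSolutionAt M A B L t q F) (x : ℝ) :
    pdt (fun s y => ((q · s y) ⬝ᵥ M *ᵥ (q · s y)) / 2) t x
      + pdx (fun s y => ((q · s y) ⬝ᵥ A *ᵥ (q · s y)) / 2) t x = (q · t x) ⬝ᵥ F x := by
  have hdiff (i : ι) := (hq.contDiff i).differentiable one_ne_zero
  calc
    _ = (q · t x) ⬝ᵥ M *ᵥ (fun i => pdt (q i) t x)
        + (q · t x) ⬝ᵥ A *ᵥ (fun i => pdx (q i) t x) :=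
      congrArg₂ (· + ·)
        (hasDerivAt_half_dotProduct_mulVec hM fun i => hasDerivAt_pdt (hdiff i) t x).deriv
        (hasDerivAt_half_dotProduct_mulVec hA fun i => hasDerivAt_pdx (hdiff i) t x).deriv
    _ = (q · t x) ⬝ᵥ F x := by
      rw [← hq.equation x, dotProduct_add, dotProduct_add,
        dotProduct_mulVec_self_of_transpose_eq_neg hB, add_zero]

theorem hasDerivAt_energy (hM : M.IsSymm) (hA : A.IsSymm) (hB : Bᵀ = -B)
    (hq : IsPeriodicSolutionAt M A B L t q F) :
    HasDerivAt (fun s => ∫ x in (0 : ℝ)..L, ((q · s x) ⬝ᵥ M *ᵥ (q · s x)) / 2)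
      (∫ x in (0 : ℝ)..L, (q · t x) ⬝ᵥ F x) t := by
  have hperiod : (q · t L) = (q · t 0) := funext fun i => (hq.periodic i).eq
  simpa [hperiod] using hasDerivAt_intervalIntegral_of_balance_law (a := 0) (b := L)
    (contDiff_half_dotProduct_mulVec M hq.contDiff)
    (contDiff_half_dotProduct_mulVec A hq.contDiff) (hq.balance_law hM hA hB)

end IsPeriodicSolutionAt

end SymmetricSystem

section Kawahara

open Matrix

/-- The coefficient matrix `M` of `∂ₜ` in the hyperbolic approximation of the Kawahara equation. -/
def kawaharaMass (τ : ℝ) : Matrix (Fin 5) (Fin 5) ℝ :=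
  diagonal ![1, τ, τ, τ, τ]

/-- The coefficient matrix `A` of `∂ₓ` in the hyperbolic approximation of the Kawahara equation,
without the nonlinear flux `f`. -/
def kawaharaFlux : Matrix (Fin 5) (Fin 5) ℝ :=
  !![0, 0, 0, 0, -1;
     0, -1, 0, 1, 0;
     0, 0, -1, 0, 0;
     0, 1, 0, 0, 0;
     -1, 0, 0, 0, 0]

/-- The coefficient matrix `B` of the undifferentiated unknowns in the hyperbolic approximation of
the Kawahara equation, brought to the left-hand side. -/
def kawaharaCoupling : Matrix (Fin 5) (Fin 5) ℝ :=
  !![0, 0, 0, 0, 0;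
     0, 0, 0, 0, -1;
     0, 0, 0, 1, 0;
     0, 0, -1, 0, 0;
     0, 1, 0, 0, 0]

theorem isSymm_kawaharaMass (τ : ℝ) : (kawaharaMass τ).IsSymm :=
  isSymm_diagonal _

theorem isSymm_kawaharaFlux : kawaharaFlux.IsSymm := by
  ext i j
  fin_cases i <;> fin_cases j <;> rfl

theorem transpose_kawaharaCoupling : kawaharaCouplingᵀ = -kawaharaCoupling := by
  ext i j
  fin_cases i <;> fin_cases j <;> simp [kawaharaCoupling]

theorem kawaharaMass_mulVec (τ : ℝ) (v : Fin 5 → ℝ) :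
    kawaharaMass τ *ᵥ v = ![v 0, τ * v 1, τ * v 2, τ * v 3, τ * v 4] := by
  ext i
  fin_cases i <;> simp [kawaharaMass, mulVec_diagonal]

theorem kawaharaFlux_mulVec (v : Fin 5 → ℝ) :
    kawaharaFlux *ᵥ v = ![-v 4, -v 1 + v 3, -v 2, v 1, -v 0] := by
  ext i
  fin_cases i <;> simp [kawaharaFlux, mulVec, dotProduct, Fin.sum_univ_five]

theorem kawaharaCoupling_mulVec (v : Fin 5 → ℝ) :
    kawaharaCoupling *ᵥ v = ![0, -v 4, v 3, -v 2, v 1] := by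
  ext i
  fin_cases i <;> simp [kawaharaCoupling, mulVec, dotProduct, Fin.sum_univ_five]

theorem dotProduct_kawaharaMass_mulVec_self (τ : ℝ) (v : Fin 5 → ℝ) :
    v ⬝ᵥ kawaharaMass τ *ᵥ v = v 0 ^ 2 + τ * (v 1 ^ 2 + v 2 ^ 2 + v 3 ^ 2 + v 4 ^ 2) := by
  simp only [kawaharaMass_mulVec, dotProduct, Fin.sum_univ_five, cons_val]
  ring

theorem isPeriodicSolutionAt_kawahara {L t τ : ℝ} {q₀ q₁ q₂ q₃ q₄ : ℝ → ℝ → ℝ}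
    {N r : ℝ → ℝ}
    (hq₀ : ContDiff ℝ 1 (Function.uncurry q₀)) (hq₁ : ContDiff ℝ 1 (Function.uncurry q₁))
    (hq₂ : ContDiff ℝ 1 (Function.uncurry q₂)) (hq₃ : ContDiff ℝ 1 (Function.uncurry q₃))
    (hq₄ : ContDiff ℝ 1 (Function.uncurry q₄))
    (hper₀ : Function.Periodic (q₀ t) L) (hper₁ : Function.Periodic (q₁ t) L)
    (hper₂ : Function.Periodic (q₂ t) L) (hper₃ : Function.Periodic (q₃ t) L)
    (hper₄ : Function.Periodic (q₄ t) L)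
    (heq₀ : ∀ x, pdt q₀ t x + N x - pdx q₄ t x = r x)
    (heq₁ : ∀ x, τ * pdt q₁ t x - pdx q₁ t x + pdx q₃ t x = q₄ t x)
    (heq₂ : ∀ x, τ * pdt q₂ t x - pdx q₂ t x = -q₃ t x)
    (heq₃ : ∀ x, τ * pdt q₃ t x + pdx q₁ t x = q₂ t x)
    (heq₄ : ∀ x, τ * pdt q₄ t x - pdx q₀ t x = -q₁ t x) :
    IsPeriodicSolutionAt (kawaharaMass τ) kawaharaFlux kawaharaCoupling L t
      ![q₀, q₁, q₂, q₃, q₄] (fun x => Pi.single 0 (r x - N x)) where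
  contDiff i := by fin_cases i <;> assumption
  periodic i := by fin_cases i <;> assumption
  equation x := by
    rw [kawaharaMass_mulVec, kawaharaFlux_mulVec, kawaharaCoupling_mulVec]
    ext i
    fin_cases i <;>
      simp only [Fin.reduceFinMk, Fin.zero_eta, Fin.mk_one, Pi.add_apply, Pi.single_apply, cons_val,
        Fin.reduceEq, if_true, if_false]
    · linear_combination heq₀ x
    · linear_combination heq₁ x
    · linear_combination heq₂ x
    · linear_combination heq₃ x
    · linear_combination heq₄ x

end Kawahara

/-- Relative energy identity for the energy-consistent hyperbolic approximation
of the Kawahara-type equation: if `q` solves the system and `q̄` solves it with a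
residual `τ R` in the first equation, then
`d/dt η(q, q̄) = -∫₀^L [(q₀ - q̄₀) ∂_x(f(q₀) - f(q̄₀)) + τ (q₀ - q̄₀) R] dx`. -/
theorem kawahara_relative_energy_identity
    (L T τ : ℝ) (hL : 0 < L) (hT : 0 < T) (hτ : 0 < τ)
    (f : ℝ → ℝ) (hf : ContDiff ℝ 1 f)
    (q₀ q₁ q₂ q₃ q₄ qb₀ qb₁ qb₂ qb₃ qb₄ R : ℝ → ℝ → ℝ)
    (hq₀ : ContDiff ℝ 1 (Function.uncurry q₀))
    (hq₁ : ContDiff ℝ 1 (Function.uncurry q₁))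
    (hq₂ : ContDiff ℝ 1 (Function.uncurry q₂))
    (hq₃ : ContDiff ℝ 1 (Function.uncurry q₃))
    (hq₄ : ContDiff ℝ 1 (Function.uncurry q₄))
    (hqb₀ : ContDiff ℝ 1 (Function.uncurry qb₀))
    (hqb₁ : ContDiff ℝ 1 (Function.uncurry qb₁))
    (hqb₂ : ContDiff ℝ 1 (Function.uncurry qb₂))
    (hqb₃ : ContDiff ℝ 1 (Function.uncurry qb₃))
    (hqb₄ : ContDiff ℝ 1 (Function.uncurry qb₄))
    (hR : Continuous (Function.uncurry R))
    (hper₀ : ∀ t, Function.Periodic (q₀ t) L)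
    (hper₁ : ∀ t, Function.Periodic (q₁ t) L)
    (hper₂ : ∀ t, Function.Periodic (q₂ t) L)
    (hper₃ : ∀ t, Function.Periodic (q₃ t) L)
    (hper₄ : ∀ t, Function.Periodic (q₄ t) L)
    (hperb₀ : ∀ t, Function.Periodic (qb₀ t) L)
    (hperb₁ : ∀ t, Function.Periodic (qb₁ t) L)
    (hperb₂ : ∀ t, Function.Periodic (qb₂ t) L)
    (hperb₃ : ∀ t, Function.Periodic (qb₃ t) L)
    (hperb₄ : ∀ t, Function.Periodic (qb₄ t) L)
    (heq₀ : ∀ t ∈ Set.Icc (0:ℝ) T, ∀ x : ℝ,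
      pdt q₀ t x + pdx (fun s y => f (q₀ s y)) t x - pdx q₄ t x = 0)
    (heq₁ : ∀ t ∈ Set.Icc (0:ℝ) T, ∀ x : ℝ,
      τ * pdt q₁ t x - pdx q₁ t x + pdx q₃ t x = q₄ t x)
    (heq₂ : ∀ t ∈ Set.Icc (0:ℝ) T, ∀ x : ℝ,
      τ * pdt q₂ t x - pdx q₂ t x = - q₃ t x)
    (heq₃ : ∀ t ∈ Set.Icc (0:ℝ) T, ∀ x : ℝ,
      τ * pdt q₃ t x + pdx q₁ t x = q₂ t x)
    (heq₄ : ∀ t ∈ Set.Icc (0:ℝ) T, ∀ x : ℝ,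
      τ * pdt q₄ t x - pdx q₀ t x = - q₁ t x)
    (heqb₀ : ∀ t ∈ Set.Icc (0:ℝ) T, ∀ x : ℝ,
      pdt qb₀ t x + pdx (fun s y => f (qb₀ s y)) t x - pdx qb₄ t x = τ * R t x)
    (heqb₁ : ∀ t ∈ Set.Icc (0:ℝ) T, ∀ x : ℝ,
      τ * pdt qb₁ t x - pdx qb₁ t x + pdx qb₃ t x = qb₄ t x)
    (heqb₂ : ∀ t ∈ Set.Icc (0:ℝ) T, ∀ x : ℝ,
      τ * pdt qb₂ t x - pdx qb₂ t x = - qb₃ t x)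
    (heqb₃ : ∀ t ∈ Set.Icc (0:ℝ) T, ∀ x : ℝ,
      τ * pdt qb₃ t x + pdx qb₁ t x = qb₂ t x)
    (heqb₄ : ∀ t ∈ Set.Icc (0:ℝ) T, ∀ x : ℝ,
      τ * pdt qb₄ t x - pdx qb₀ t x = - qb₁ t x) :
    ∀ t ∈ Set.Icc (0:ℝ) T,
      HasDerivWithinAt
        (fun s => ∫ x in (0:ℝ)..L,
          ((q₀ s x - qb₀ s x) ^ 2 / 2
            + τ / 2 * ((q₁ s x - qb₁ s x) ^ 2 + (q₂ s x - qb₂ s x) ^ 2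
                + (q₃ s x - qb₃ s x) ^ 2 + (q₄ s x - qb₄ s x) ^ 2)))
        (- ∫ x in (0:ℝ)..L,
          ((q₀ t x - qb₀ t x)
              * pdx (fun s y => f (q₀ s y) - f (qb₀ s y)) t x
            + τ * (q₀ t x - qb₀ t x) * R t x))
        (Set.Icc (0:ℝ) T) t := by
  intro t ht
  have hq := isPeriodicSolutionAt_kawahara hq₀ hq₁ hq₂ hq₃ hq₄
    (hper₀ t) (hper₁ t) (hper₂ t) (hper₃ t) (hper₄ t)
    (heq₀ t ht) (heq₁ t ht) (heq₂ t ht) (heq₃ t ht) (heq₄ t ht)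
  have hqb := isPeriodicSolutionAt_kawahara hqb₀ hqb₁ hqb₂ hqb₃ hqb₄
    (hperb₀ t) (hperb₁ t) (hperb₂ t) (hperb₃ t) (hperb₄ t)
    (heqb₀ t ht) (heqb₁ t ht) (heqb₂ t ht) (heqb₃ t ht) (heqb₄ t ht)
  have hflux (x : ℝ) : pdx (fun s y => f (q₀ s y) - f (qb₀ s y)) t x
      = pdx (fun s y => f (q₀ s y)) t x - pdx (fun s y => f (qb₀ s y)) t x :=
    pdx_sub (u := fun s y => f (q₀ s y)) (v := fun s y => f (qb₀ s y))
      ((hf.comp hq₀).differentiable one_ne_zero) ((hf.comp hqb₀).differentiable one_ne_zero) t x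
  have henergy := (hq.sub hqb).hasDerivAt_energy
    (isSymm_kawaharaMass τ) isSymm_kawaharaFlux transpose_kawaharaCoupling
  simp only [dotProduct_kawaharaMass_mulVec_self, add_div, mul_div_right_comm τ] at henergy
  refine henergy.hasDerivWithinAt.congr_deriv ?_
  rw [← intervalIntegral.integral_neg]
  congr with x
  simp only [hflux, Pi.sub_apply, ← Pi.single_sub, dotProduct_single, Matrix.cons_val_zero]
  ring
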